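/- Let 0 < q < 1, let μ, ν, h be as in the successive-approximation scheme with G[μ], G[ν], h bounded, u_0 = (1−q)^{1/(1−q)} G[μ]^{1/(1−q)} and u_j = G[u_{j−1}^q dμ] + G[ν] + h. Then sup_j ‖u_j‖_∞ ≤ max{1, (‖G[μ]‖_∞ + ‖G[ν]‖_∞ + ‖h‖_∞)^{1/(1−q)}}, and consequently u := lim_j u_j exists pointwise and satisfies u = G[u^q dμ] + G[ν] + h on Ω (by monotone convergence). -/

import Mathlib

open MeasureTheory
open scoped ENNReal

open Filter Topology

/-!
Write `T w = G[w ^ q dμ] + G[ν] + h`. The constant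
`B = max 1 ((‖G[μ]‖ + ‖G[ν]‖ + ‖h‖) ^ (1 / (1 - q)))` satisfies `u 0 ≤ B` and `T B ≤ B`, which
bounds all iterates since `T` is monotone.

The measures need not be s-finite, so the `u j` need not be measurable, and monotone convergence
does not give `u = T u` for their supremum `u`. Only `T u ≤ u` is in question, and it follows from
the sublinearity of `T`: Hölder's inequality survives for the lower integral of a non-measurable
function, and yields, for `D ≥ 1` and `0 ≤ r ≤ 1`,
`T (D * w ^ r) ≤ D ^ q * (T w) ^ r * (G[μ] + G[ν] + h) ^ (1 - r)`.
Since `G[μ] + G[ν] + h ≤ C * (u 1) ^ (1 - q)` for some constant `C`, any `v ≤ T v` with `v ≤ C`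
satisfies `v ≤ C ^ ((j + 1) * q ^ (j - 1)) * (u (j + 1)) ^ (1 - q ^ j)` for all `j`, by induction;
letting `j → ∞` gives `v ≤ u`. Take `v = T u`.
-/

lemma continuousAt_ennreal_const_rpow {a : ℝ≥0∞} {b : ℝ} (ha : a ≠ ⊤) (hab : a ≠ 0 ∨ 0 < b) :
    ContinuousAt (fun e : ℝ => a ^ e) b := by
  lift a to NNReal using ha
  have hcont : ContinuousAt (fun e : ℝ => ((a ^ e : NNReal) : ℝ≥0∞)) b :=
    ENNReal.continuous_coe.continuousAt.comp <|
      (NNReal.continuousAt_rpow (hab.imp_left ENNReal.coe_ne_zero.1)).comp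
        (f := fun e : ℝ => (a, e)) (by fun_prop)
  refine hcont.congr ?_
  rcases hab with ha0 | hb
  · exact .of_forall fun e => ENNReal.coe_rpow_of_ne_zero (ENNReal.coe_ne_zero.1 ha0) e
  · filter_upwards [lt_mem_nhds hb] with e he using ENNReal.coe_rpow_of_nonneg a he.le

lemma tendsto_rpow_mul_rpow_one_sub_pow {q : ℝ} {C a : ℝ≥0∞} (hq0 : 0 ≤ q) (hq1 : q < 1)
    (hC0 : C ≠ 0) (hC : C ≠ ⊤) (ha : a ≠ ⊤) :
    Tendsto (fun j : ℕ => C ^ ((j + 1) * q ^ j / q) * a ^ (1 - q ^ j)) atTop (𝓝 a) := by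
  have hpow : Tendsto (fun j : ℕ => q ^ j) atTop (𝓝 0) :=
    tendsto_pow_atTop_nhds_zero_of_lt_one hq0 hq1
  have hexpC : Tendsto (fun j : ℕ => (j + 1) * q ^ j / q) atTop (𝓝 0) := by
    simpa [add_mul] using
      ((tendsto_self_mul_const_pow_of_lt_one hq0 hq1).add hpow).div_const q
  have hexpa : Tendsto (fun j : ℕ => 1 - q ^ j) atTop (𝓝 1) := by
    simpa using hpow.const_sub 1
  have htendC := (continuousAt_ennreal_const_rpow hC (.inl hC0)).tendsto.comp hexpC
  have htenda := (continuousAt_ennreal_const_rpow ha (.inr one_pos)).tendsto.comp hexpa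
  simpa using ENNReal.Tendsto.mul htendC (by simp) htenda (by simp)

lemma ennreal_rpow_mul_rpow_one_sub (a : ℝ≥0∞) {r : ℝ} (hr0 : 0 ≤ r) (hr1 : r ≤ 1) :
    a ^ r * a ^ (1 - r) = a := by
  rw [← ENNReal.rpow_add_of_nonneg _ _ hr0 (sub_nonneg.2 hr1), add_sub_cancel, ENNReal.rpow_one]

lemma le_max_one_rpow_one_div_rpow (S : ℝ≥0∞) {r : ℝ} (hr : 0 < r) :
    S ≤ max 1 (S ^ (1 / r)) ^ r :=
  calc S = (S ^ (1 / r)) ^ r := by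
        rw [← ENNReal.rpow_mul, one_div_mul_cancel hr.ne', ENNReal.rpow_one]
    _ ≤ _ := ENNReal.rpow_le_rpow (le_max_right _ _) hr.le

lemma rpow_mul_rpow_add_rpow_mul_rpow_le (a b c d : ℝ≥0∞) {r : ℝ} (hr0 : 0 ≤ r) (hr1 : r ≤ 1) :
    a ^ r * b ^ (1 - r) + c ^ r * d ^ (1 - r) ≤ (a + c) ^ r * (b + d) ^ (1 - r) := by
  simpa [lintegral_count, tsum_bool] using
    ENNReal.lintegral_mul_norm_pow_le (μ := Measure.count) (f := fun i : Bool => cond i a c)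
      (g := fun i => cond i b d) measurable_from_top.aemeasurable measurable_from_top.aemeasurable
      hr0 (sub_nonneg.2 hr1) (add_sub_cancel r 1)

section Holder

variable {α : Type*} [MeasurableSpace α]

lemma lintegral_rpow_le_rpow_lintegral_mul_measure_univ (κ : Measure α) (f : α → ℝ≥0∞) {r : ℝ}
    (hr0 : 0 ≤ r) (hr1 : r ≤ 1) :
    ∫⁻ y, f y ^ r ∂κ ≤ (∫⁻ y, f y ∂κ) ^ r * κ Set.univ ^ (1 - r) := by
  rcases hr0.eq_or_lt with rfl | hr
  · simp
  obtain ⟨φ, hφ, hφf, hφ_eq⟩ := exists_measurable_le_lintegral_eq κ fun y => f y ^ r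
  have hroot_le : ∀ y, φ y ^ r⁻¹ ≤ f y := fun y => (ENNReal.rpow_inv_le_iff hr).2 (hφf y)
  calc ∫⁻ y, f y ^ r ∂κ = ∫⁻ y, (φ y ^ r⁻¹) ^ r * 1 ^ (1 - r) ∂κ := by
        simp [hφ_eq, ENNReal.rpow_inv_rpow hr.ne']
    _ ≤ (∫⁻ y, φ y ^ r⁻¹ ∂κ) ^ r * (∫⁻ _, 1 ∂κ) ^ (1 - r) :=
        ENNReal.lintegral_mul_norm_pow_le (hφ.pow_const _).aemeasurable aemeasurable_const
          hr0 (sub_nonneg.2 hr1) (add_sub_cancel r 1)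
    _ ≤ (∫⁻ y, f y ∂κ) ^ r * κ Set.univ ^ (1 - r) := by
        rw [lintegral_one]
        gcongr with y
        exact hroot_le y

lemma lintegral_rpow_add_le (κ : Measure α) (f : α → ℝ≥0∞) (c : ℝ≥0∞) {r : ℝ}
    (hr0 : 0 ≤ r) (hr1 : r ≤ 1) :
    ∫⁻ y, f y ^ r ∂κ + c ≤ (∫⁻ y, f y ∂κ + c) ^ r * (κ Set.univ + c) ^ (1 - r) :=
  calc ∫⁻ y, f y ^ r ∂κ + c
      ≤ (∫⁻ y, f y ∂κ) ^ r * κ Set.univ ^ (1 - r) + c ^ r * c ^ (1 - r) := by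
        rw [ennreal_rpow_mul_rpow_one_sub c hr0 hr1]
        gcongr
        exact lintegral_rpow_le_rpow_lintegral_mul_measure_univ κ f hr0 hr1
    _ ≤ _ := rpow_mul_rpow_add_rpow_mul_rpow_le _ _ _ _ hr0 hr1

end Holder

section SublinearPotential

variable {Ω : Type*} [MeasurableSpace Ω]

/-- The operator `w ↦ G[w ^ q dμ] + f` whose fixed points solve the integral equation. The measure
`G(x, ·) dμ` is encoded as `κ x`, a mere
family of measures rather than a `Kernel`, because it may depend on `x` non-measurably. -/
noncomputable def sublinearPotential (q : ℝ) (κ : Ω → Measure Ω) (f w : Ω → ℝ≥0∞) : Ω → ℝ≥0∞ :=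
  fun x => ∫⁻ y, w y ^ q ∂κ x + f x

/-- The starting function `u₀ = (1 - q) ^ (1 / (1 - q)) G[μ] ^ (1 / (1 - q))` of the scheme, with
`κ x = G(x, ·) dμ` as in `sublinearPotential`. -/
noncomputable def initialApproximation (q : ℝ) (κ : Ω → Measure Ω) : Ω → ℝ≥0∞ :=
  fun x => ENNReal.ofReal ((1 - q) ^ (1 / (1 - q))) * κ x Set.univ ^ (1 / (1 - q))

variable {q : ℝ} {κ : Ω → Measure Ω} {f : Ω → ℝ≥0∞}

lemma sublinearPotential_mono (hq : 0 ≤ q) : Monotone (sublinearPotential q κ f) := by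
  intro v w hvw x
  unfold sublinearPotential
  gcongr with y
  exact hvw y

lemma sublinearPotential_const_le {B : ℝ≥0∞} (hq0 : 0 ≤ q) (hq1 : q ≤ 1) (hB : 1 ≤ B)
    (hκf : ∀ x, κ x Set.univ + f x ≤ B ^ (1 - q)) :
    sublinearPotential q κ f (Function.const Ω B) ≤ Function.const Ω B := by
  intro x
  have hBq : 1 ≤ B ^ q := by simpa using ENNReal.rpow_le_rpow hB hq0
  calc sublinearPotential q κ f (Function.const Ω B) x = B ^ q * κ x Set.univ + f x := by
        simp [sublinearPotential]
    _ ≤ B ^ q * κ x Set.univ + B ^ q * f x := by gcongr; exact le_mul_of_one_le_left' hBq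
    _ = B ^ q * (κ x Set.univ + f x) := (mul_add _ _ _).symm
    _ ≤ B ^ q * B ^ (1 - q) := by gcongr; exact hκf x
    _ = B := ennreal_rpow_mul_rpow_one_sub B hq0 hq1

lemma sublinearPotential_const_mul_rpow_le {D : ℝ≥0∞} {r : ℝ} (hq : 0 ≤ q) (hD1 : 1 ≤ D)
    (hD : D ≠ ⊤) (hr0 : 0 ≤ r) (hr1 : r ≤ 1) (w : Ω → ℝ≥0∞) (x : Ω) :
    sublinearPotential q κ f (fun y => D * w y ^ r) x ≤
      D ^ q * (sublinearPotential q κ f w x ^ r * (κ x Set.univ + f x) ^ (1 - r)) := by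
  have hDq : 1 ≤ D ^ q := by simpa using ENNReal.rpow_le_rpow hD1 hq
  have hpow : ∀ y, (D * w y ^ r) ^ q = D ^ q * (w y ^ q) ^ r := fun y => by
    rw [ENNReal.mul_rpow_of_nonneg _ _ hq, ← ENNReal.rpow_mul, ← ENNReal.rpow_mul, mul_comm r q]
  calc sublinearPotential q κ f (fun y => D * w y ^ r) x
      = D ^ q * ∫⁻ y, (w y ^ q) ^ r ∂κ x + f x := by
        simp only [sublinearPotential, hpow]
        rw [lintegral_const_mul' _ _ (ENNReal.rpow_ne_top_of_nonneg hq hD)]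
    _ ≤ D ^ q * ∫⁻ y, (w y ^ q) ^ r ∂κ x + D ^ q * f x := by
        gcongr; exact le_mul_of_one_le_left' hDq
    _ = D ^ q * (∫⁻ y, (w y ^ q) ^ r ∂κ x + f x) := (mul_add _ _ _).symm
    _ ≤ _ := by gcongr; exact lintegral_rpow_add_le (κ x) _ (f x) hr0 hr1

section Comparison

variable {v w : Ω → ℝ≥0∞} {C : ℝ≥0∞}

lemma le_mul_rpow_sublinearPotential {D : ℝ≥0∞} {r : ℝ} (hq0 : 0 ≤ q) (hq1 : q ≤ 1)
    (hr0 : 0 ≤ r) (hr1 : r ≤ 1) (hD1 : 1 ≤ D) (hD : D ≠ ⊤) (hv : v ≤ sublinearPotential q κ f v)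
    (hκf : ∀ x, κ x Set.univ + f x ≤ C * sublinearPotential q κ f w x ^ (1 - q))
    (hvw : ∀ x, v x ≤ D * w x ^ r) (x : Ω) :
    v x ≤ D ^ q * C ^ (1 - r) * sublinearPotential q κ f w x ^ (1 - q * (1 - r)) := by
  have hq' : 0 ≤ 1 - q := sub_nonneg.2 hq1
  have hr' : 0 ≤ 1 - r := sub_nonneg.2 hr1
  set W := sublinearPotential q κ f w x
  calc v x ≤ sublinearPotential q κ f v x := hv x
    _ ≤ sublinearPotential q κ f (fun y => D * w y ^ r) x := sublinearPotential_mono hq0 hvw x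
    _ ≤ D ^ q * (W ^ r * (κ x Set.univ + f x) ^ (1 - r)) :=
        sublinearPotential_const_mul_rpow_le hq0 hD1 hD hr0 hr1 w x
    _ ≤ D ^ q * (W ^ r * (C * W ^ (1 - q)) ^ (1 - r)) := by gcongr; exact hκf x
    _ = D ^ q * C ^ (1 - r) * (W ^ r * W ^ ((1 - q) * (1 - r))) := by
        rw [ENNReal.mul_rpow_of_nonneg _ _ hr', ← ENNReal.rpow_mul]
        ring
    _ = D ^ q * C ^ (1 - r) * W ^ (1 - q * (1 - r)) := by
        rw [← ENNReal.rpow_add_of_nonneg _ _ hr0 (mul_nonneg hq' hr')]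
        congr 2
        ring

lemma le_rpow_mul_iterate_sublinearPotential_rpow (hq0 : 0 < q) (hq1 : q ≤ 1) (hC1 : 1 ≤ C)
    (hC : C ≠ ⊤) (hw : w ≤ sublinearPotential q κ f w)
    (hκf : ∀ x, κ x Set.univ + f x ≤ C * w x ^ (1 - q))
    (hv : v ≤ sublinearPotential q κ f v) (hvC : ∀ x, v x ≤ C) (j : ℕ) (x : Ω) :
    v x ≤ C ^ ((j + 1) * q ^ j / q) * (sublinearPotential q κ f)^[j] w x ^ (1 - q ^ j) := by
  have hT := sublinearPotential_mono (κ := κ) (f := f) hq0.le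
  induction j generalizing x with
  | zero =>
    have hCq : C ^ (1 : ℝ) ≤ C ^ q⁻¹ :=
      ENNReal.rpow_le_rpow_of_exponent_le hC1 ((one_le_inv₀ hq0).2 hq1)
    simpa using (hvC x).trans (by simpa using hCq)
  | succ j ih =>
    set e : ℝ := (j + 1) * q ^ j / q with he
    have he0 : 0 ≤ e := by positivity
    have hqj0 : 0 ≤ q ^ j := pow_nonneg hq0.le j
    have hqj1 : q ^ j ≤ 1 := pow_le_one₀ hq0.le hq1
    have hw_le : w ≤ (sublinearPotential q κ f)^[j + 1] w :=
      hT.monotone_iterate_of_le_map hw (zero_le (a := j + 1))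
    rw [Function.iterate_succ_apply'] at hw_le ⊢
    have hstep := le_mul_rpow_sublinearPotential hq0.le hq1 (sub_nonneg.2 hqj1)
      (sub_le_self 1 hqj0) (by simpa using ENNReal.rpow_le_rpow hC1 he0)
      (ENNReal.rpow_ne_top_of_nonneg he0 hC) hv
      (fun y => (hκf y).trans (by gcongr; exact hw_le y)) ih x
    have hexp : ((j + 1 : ℕ) + 1 : ℝ) * q ^ (j + 1) / q = e * q + q ^ j := by
      rw [he]
      push_cast
      field_simp
      ring
    rwa [← ENNReal.rpow_mul, sub_sub_cancel, ← ENNReal.rpow_add_of_nonneg _ _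
      (mul_nonneg he0 hq0.le) hqj0, ← hexp, ← pow_succ'] at hstep

theorem le_iSup_iterate_sublinearPotential (hq0 : 0 < q) (hq1 : q < 1) (hC1 : 1 ≤ C) (hC : C ≠ ⊤)
    (hw : w ≤ sublinearPotential q κ f w)
    (hκf : ∀ x, κ x Set.univ + f x ≤ C * w x ^ (1 - q))
    (hv : v ≤ sublinearPotential q κ f v) (hvC : ∀ x, v x ≤ C) :
    v ≤ ⨆ j, (sublinearPotential q κ f)^[j] w := by
  intro x
  rw [iSup_apply]
  set a := ⨆ j, (sublinearPotential q κ f)^[j] w x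
  rcases eq_or_ne a ⊤ with ha_top | ha_top
  · exact ha_top ▸ le_top
  refine ge_of_tendsto' (tendsto_rpow_mul_rpow_one_sub_pow hq0.le hq1
    (one_pos.trans_le hC1).ne' hC ha_top) fun j => ?_
  have hqj : 0 ≤ 1 - q ^ j := sub_nonneg.2 (pow_le_one₀ hq0.le hq1.le)
  refine (le_rpow_mul_iterate_sublinearPotential_rpow hq0 hq1.le hC1 hC hw hκf hv hvC j x).trans ?_
  gcongr
  exact le_iSup (fun j => (sublinearPotential q κ f)^[j] w x) j

end Comparison

section FixedPoint

variable {u₀ : Ω → ℝ≥0∞} {B c : ℝ≥0∞}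

lemma iterate_sublinearPotential_le_const (hq : 0 ≤ q) (hu₀B : u₀ ≤ Function.const Ω B)
    (hTB : sublinearPotential q κ f (Function.const Ω B) ≤ Function.const Ω B) (j : ℕ) :
    (sublinearPotential q κ f)^[j] u₀ ≤ Function.const Ω B :=
  have hT := sublinearPotential_mono hq
  (hT.iterate j hu₀B).trans (hT.antitone_iterate_of_map_le hTB (zero_le (a := j)))

lemma iSup_iterate_sublinearPotential_le_map (hq : 0 ≤ q) (hu₀ : u₀ ≤ sublinearPotential q κ f u₀) :
    ⨆ j, (sublinearPotential q κ f)^[j] u₀ ≤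
      sublinearPotential q κ f (⨆ j, (sublinearPotential q κ f)^[j] u₀) := by
  have hT := sublinearPotential_mono (κ := κ) (f := f) hq
  refine iSup_le fun j => ?_
  calc (sublinearPotential q κ f)^[j] u₀ ≤ (sublinearPotential q κ f)^[j + 1] u₀ :=
        hT.monotone_iterate_of_le_map hu₀ j.le_succ
    _ = sublinearPotential q κ f ((sublinearPotential q κ f)^[j] u₀) :=
        Function.iterate_succ_apply' _ _ _
    _ ≤ _ := hT (le_iSup (fun j => (sublinearPotential q κ f)^[j] u₀) j)

lemma measure_univ_add_le_mul_sublinearPotential_rpow (hq0 : 0 ≤ q) (hq1 : q ≤ 1)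
    (hu₀ : u₀ ≤ sublinearPotential q κ f u₀) (hB : sublinearPotential q κ f u₀ ≤ Function.const Ω B)
    (hκ : ∀ x, κ x Set.univ ≤ c * u₀ x ^ (1 - q)) (x : Ω) :
    κ x Set.univ + f x ≤ (c + B ^ q) * sublinearPotential q κ f u₀ x ^ (1 - q) := by
  set W := sublinearPotential q κ f u₀ x
  have hκW : κ x Set.univ ≤ c * W ^ (1 - q) :=
    (hκ x).trans (by gcongr; exact hu₀ x)
  have hfW : f x ≤ B ^ q * W ^ (1 - q) :=
    calc f x ≤ W := le_add_self
      _ = W ^ q * W ^ (1 - q) := (ennreal_rpow_mul_rpow_one_sub W hq0 hq1).symm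
      _ ≤ B ^ q * W ^ (1 - q) := by gcongr; exact hB x
  rw [add_mul]
  exact add_le_add hκW hfW

theorem sublinearPotential_iSup_iterate (hq0 : 0 < q) (hq1 : q < 1)
    (hu₀ : u₀ ≤ sublinearPotential q κ f u₀) (hu₀B : u₀ ≤ Function.const Ω B)
    (hTB : sublinearPotential q κ f (Function.const Ω B) ≤ Function.const Ω B) (hB : B ≠ ⊤)
    (hκ : ∀ x, κ x Set.univ ≤ c * u₀ x ^ (1 - q)) (hc : c ≠ ⊤) :
    sublinearPotential q κ f (⨆ j, (sublinearPotential q κ f)^[j] u₀) =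
      ⨆ j, (sublinearPotential q κ f)^[j] u₀ := by
  set T := sublinearPotential q κ f
  set u := ⨆ j, T^[j] u₀
  have hT : Monotone T := sublinearPotential_mono hq0.le
  have hiter_le := iterate_sublinearPotential_le_const hq0.le hu₀B hTB
  have hu_le : u ≤ T u := iSup_iterate_sublinearPotential_le_map hq0.le hu₀
  have hTu_le : T u ≤ Function.const Ω B := (hT (iSup_le hiter_le)).trans hTB
  set C := max (max 1 B) (c + B ^ q) with hC_def
  have hBC : B ≤ C := (le_max_right _ _).trans (le_max_left _ _)
  have hC : C ≠ ⊤ := by simp [hC_def, hB, hc, hq0.le]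
  have hκf : ∀ x, κ x Set.univ + f x ≤ C * T u₀ x ^ (1 - q) := fun x =>
    (measure_univ_add_le_mul_sublinearPotential_rpow hq0.le hq1.le hu₀ (hiter_le 1) hκ x).trans
      (by gcongr; exact le_max_right _ _)
  have hcomparison : T u ≤ ⨆ j, T^[j] (T u₀) :=
    le_iSup_iterate_sublinearPotential hq0 hq1 ((le_max_left _ _).trans (le_max_left _ _)) hC
      (hT hu₀) hκf (hT hu_le) fun x => (hTu_le x).trans hBC
  exact le_antisymm
    (hcomparison.trans (iSup_le fun j => le_iSup (fun j => T^[j] u₀) (j + 1))) hu_le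

end FixedPoint

section InitialApproximation

lemma initialApproximation_le_rpow (hq0 : 0 ≤ q) (hq1 : q < 1) (x : Ω) :
    initialApproximation q κ x ≤ κ x Set.univ ^ (1 / (1 - q)) := by
  have hq' : 0 < 1 - q := sub_pos.2 hq1
  refine mul_le_of_le_one_left' (ENNReal.ofReal_le_one.2 ?_)
  exact Real.rpow_le_one hq'.le (sub_le_self 1 hq0) (by positivity)

lemma measure_univ_eq_mul_initialApproximation_rpow (hq1 : q < 1) (x : Ω) :
    κ x Set.univ = ENNReal.ofReal (1 / (1 - q)) * initialApproximation q κ x ^ (1 - q) := by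
  have hq' : 0 < 1 - q := sub_pos.2 hq1
  rw [initialApproximation, ENNReal.mul_rpow_of_nonneg _ _ hq'.le, ← ENNReal.rpow_mul,
    ENNReal.ofReal_rpow_of_nonneg (by positivity) hq'.le, ← Real.rpow_mul hq'.le,
    one_div_mul_cancel hq'.ne', ENNReal.rpow_one, Real.rpow_one, ← mul_assoc,
    ← ENNReal.ofReal_mul (by positivity), one_div_mul_cancel hq'.ne', ENNReal.ofReal_one, one_mul]

lemma initialApproximation_le_sublinearPotential (hq0 : 0 ≤ q) (hq1 : q < 1) {x : Ω}
    (hiter : κ x Set.univ ^ (1 / (1 - q)) ≤ ENNReal.ofReal (1 / (1 - q)) *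
      ∫⁻ y, κ y Set.univ ^ (1 / (1 - q) - 1) ∂κ x) :
    initialApproximation q κ x ≤ sublinearPotential q κ f (initialApproximation q κ) x := by
  have hq' : 0 < 1 - q := sub_pos.2 hq1
  set s : ℝ := 1 / (1 - q) with hs
  set a : ℝ := (1 - q) ^ s with ha
  have ha0 : 0 ≤ a := by positivity
  have hsq : s * q = s - 1 := by
    rw [hs]
    field_simp
    ring
  have has : a * s = a ^ q := by
    rw [ha, ← Real.rpow_mul hq'.le, hsq, Real.rpow_sub_one hq'.ne', hs, mul_one_div]
  have hpow : ∀ y, initialApproximation q κ y ^ q =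
      ENNReal.ofReal (a ^ q) * κ y Set.univ ^ (s - 1) := fun y => by
    rw [initialApproximation, ENNReal.mul_rpow_of_nonneg _ _ hq0, ← ENNReal.rpow_mul, hsq,
      ENNReal.ofReal_rpow_of_nonneg ha0 hq0]
  calc initialApproximation q κ x
      ≤ ENNReal.ofReal a * (ENNReal.ofReal s * ∫⁻ y, κ y Set.univ ^ (s - 1) ∂κ x) := by
        unfold initialApproximation
        gcongr
    _ = ENNReal.ofReal (a ^ q) * ∫⁻ y, κ y Set.univ ^ (s - 1) ∂κ x := by
        rw [← mul_assoc, ← ENNReal.ofReal_mul ha0, has]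
    _ = ∫⁻ y, initialApproximation q κ y ^ q ∂κ x := by
        simp only [hpow]
        rw [lintegral_const_mul' _ _ ENNReal.ofReal_ne_top]
    _ ≤ _ := le_self_add

end InitialApproximation

theorem iterate_initialApproximation_le_and_sublinearPotential_iSup {S : ℝ≥0∞} (hq0 : 0 < q)
    (hq1 : q < 1) (hS : S ≠ ⊤) (hκf : ∀ x, κ x Set.univ + f x ≤ S)
    (hiter : ∀ x, κ x Set.univ ^ (1 / (1 - q)) ≤ ENNReal.ofReal (1 / (1 - q)) *
      ∫⁻ y, κ y Set.univ ^ (1 / (1 - q) - 1) ∂κ x) :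
    (∀ j, (sublinearPotential q κ f)^[j] (initialApproximation q κ) ≤
      Function.const Ω (max 1 (S ^ (1 / (1 - q))))) ∧
    sublinearPotential q κ f (⨆ j, (sublinearPotential q κ f)^[j] (initialApproximation q κ)) =
      ⨆ j, (sublinearPotential q κ f)^[j] (initialApproximation q κ) := by
  have hq' : 0 < 1 - q := sub_pos.2 hq1
  have hs : 0 ≤ 1 / (1 - q) := by positivity
  set B := max 1 (S ^ (1 / (1 - q)))
  have hB : B ≠ ⊤ :=
    (max_lt ENNReal.one_lt_top (ENNReal.rpow_lt_top_of_nonneg hs hS)).ne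
  have hTB : sublinearPotential q κ f (Function.const Ω B) ≤ Function.const Ω B :=
    sublinearPotential_const_le hq0.le hq1.le (le_max_left _ _) fun x =>
      (hκf x).trans (le_max_one_rpow_one_div_rpow S hq')
  have hu₀B : initialApproximation q κ ≤ Function.const Ω B := fun x =>
    calc initialApproximation q κ x ≤ κ x Set.univ ^ (1 / (1 - q)) :=
          initialApproximation_le_rpow hq0.le hq1 x
      _ ≤ S ^ (1 / (1 - q)) := ENNReal.rpow_le_rpow (le_self_add.trans (hκf x)) hs
      _ ≤ B := le_max_right _ _
  exact ⟨iterate_sublinearPotential_le_const hq0.le hu₀B hTB,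
    sublinearPotential_iSup_iterate hq0 hq1
      (fun x => initialApproximation_le_sublinearPotential hq0.le hq1 (hiter x)) hu₀B hTB hB
      (fun x => (measure_univ_eq_mul_initialApproximation_rpow hq1 x).le) ENNReal.ofReal_ne_top⟩

end SublinearPotential

theorem successive_approximation_bounded_and_limit_general {Ω : Type*} [MeasurableSpace Ω]
    (G : Ω → Ω → ℝ≥0∞) (μ ν : Measure Ω)
    (q : ℝ) (hq0 : 0 < q) (hq1 : q < 1)
    (h : Ω → ℝ≥0∞) (u : ℕ → Ω → ℝ≥0∞)
    (hGmeas : ∀ x, AEMeasurable (G x) μ)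
    (hGμb : (⨆ z, ∫⁻ y, G z y ∂μ) ≠ ⊤)
    (hGνb : (⨆ z, ∫⁻ y, G z y ∂ν) ≠ ⊤)
    (hhb : (⨆ z, h z) ≠ ⊤)
    (hu0 : ∀ x, u 0 x
      = ENNReal.ofReal ((1 - q) ^ (1 / (1 - q))) * (∫⁻ y, G x y ∂μ) ^ (1 / (1 - q)))
    (huj : ∀ j x, u (j + 1) x
      = (∫⁻ y, G x y * (u j y) ^ q ∂μ) + (∫⁻ y, G x y ∂ν) + h x)
    (hiter : ∀ x, (∫⁻ y, G x y ∂μ) ^ (1 / (1 - q)) ≤ ENNReal.ofReal (1 / (1 - q)) *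
      ∫⁻ y, G x y * (∫⁻ z, G y z ∂μ) ^ (1 / (1 - q) - 1) ∂μ) :
    (∀ j x, u j x ≤
      max 1 (((⨆ z, ∫⁻ y, G z y ∂μ) + (⨆ z, ∫⁻ y, G z y ∂ν) + (⨆ z, h z))
        ^ (1 / (1 - q))))
    ∧ ∀ x, (⨆ j, u j x)
      = (∫⁻ y, G x y * (⨆ j, u j y) ^ q ∂μ) + (∫⁻ y, G x y ∂ν) + h x := by
  set κ : Ω → Measure Ω := fun x => μ.withDensity (G x) with hκ_def
  set f : Ω → ℝ≥0∞ := fun x => ∫⁻ y, G x y ∂ν + h x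
  have hGμ : ∀ x, ∫⁻ y, G x y ∂μ ≤ ⨆ z, ∫⁻ y, G z y ∂μ := le_iSup fun z => ∫⁻ y, G z y ∂μ
  have hGν : ∀ x, ∫⁻ y, G x y ∂ν ≤ ⨆ z, ∫⁻ y, G z y ∂ν := le_iSup fun z => ∫⁻ y, G z y ∂ν
  have hκ_univ : ∀ x, κ x Set.univ = ∫⁻ y, G x y ∂μ := fun x => by simp [hκ_def]
  have hκ_lintegral : ∀ x (w : Ω → ℝ≥0∞), ∫⁻ y, w y ∂κ x = ∫⁻ y, G x y * w y ∂μ := fun x w =>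
    lintegral_withDensity_eq_lintegral_mul_non_measurable₀ μ (hGmeas x)
      (ae_lt_top' (hGmeas x) (ne_top_of_le_ne_top hGμb (hGμ x))) w
  have hu : ∀ j, u j = (sublinearPotential q κ f)^[j] (initialApproximation q κ) := by
    intro j
    induction j with
    | zero => funext x; simp [hu0, initialApproximation, hκ_univ]
    | succ j ih =>
      funext x
      rw [huj, Function.iterate_succ_apply', ← ih, sublinearPotential, hκ_lintegral, add_assoc]
  obtain ⟨hbound, hlimit⟩ := iterate_initialApproximation_le_and_sublinearPotential_iSup
    (f := f) hq0 hq1 (ENNReal.add_ne_top.2 ⟨ENNReal.add_ne_top.2 ⟨hGμb, hGνb⟩, hhb⟩)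
    (fun x => by
      rw [hκ_univ, ← add_assoc]
      exact add_le_add (add_le_add (hGμ x) (hGν x)) (le_iSup h x))
    (by simpa only [hκ_univ, hκ_lintegral] using hiter)
  simp only [← hu] at hbound hlimit
  refine ⟨hbound, fun x => ?_⟩
  have hlimit_x := congrFun hlimit x
  simp only [sublinearPotential, hκ_lintegral, iSup_apply] at hlimit_x
  rw [← hlimit_x, add_assoc]

/-- Uniform bound and convergence of the successive approximation scheme:
`sup_j ‖u_j‖_∞ ≤ max {1, (‖G[μ]‖_∞ + ‖G[ν]‖_∞ + ‖h‖_∞)^{1/(1−q)}}` and the pointwise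
(monotone) limit `u = lim_j u_j` satisfies `u = G[u^q dμ] + G[ν] + h` on `Ω`. -/
theorem successive_approximation_bounded_and_limit {Ω : Type*} [MeasurableSpace Ω]
    (G : Ω → Ω → ℝ≥0∞) (μ ν : Measure Ω)
    (q : ℝ) (hq0 : 0 < q) (hq1 : q < 1)
    (h : Ω → ℝ≥0∞) (u : ℕ → Ω → ℝ≥0∞)
    (hGmeas : Measurable (Function.uncurry G)) (hhmeas : Measurable h)
    (hGμb : (⨆ z, ∫⁻ y, G z y ∂μ) ≠ ⊤)
    (hGνb : (⨆ z, ∫⁻ y, G z y ∂ν) ≠ ⊤)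
    (hhb : (⨆ z, h z) ≠ ⊤)
    (hpos : 0 < (⨆ z, ∫⁻ y, G z y ∂μ) + (⨆ z, ∫⁻ y, G z y ∂ν) + (⨆ z, h z))
    (hu0 : ∀ x, u 0 x
      = ENNReal.ofReal ((1 - q) ^ (1 / (1 - q))) * (∫⁻ y, G x y ∂μ) ^ (1 / (1 - q)))
    (huj : ∀ j x, u (j + 1) x
      = (∫⁻ y, G x y * (u j y) ^ q ∂μ) + (∫⁻ y, G x y ∂ν) + h x)
    (hiter : ∀ s : ℝ, 1 ≤ s → ∀ x,
      (∫⁻ y, G x y ∂μ) ^ s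
        ≤ ENNReal.ofReal s * ∫⁻ y, G x y * (∫⁻ z, G y z ∂μ) ^ (s - 1) ∂μ) :
    (∀ j x, u j x ≤
      max 1 (((⨆ z, ∫⁻ y, G z y ∂μ) + (⨆ z, ∫⁻ y, G z y ∂ν) + (⨆ z, h z))
        ^ (1 / (1 - q))))
    ∧ ∀ x, (⨆ j, u j x)
      = (∫⁻ y, G x y * (⨆ j, u j y) ^ q ∂μ) + (∫⁻ y, G x y ∂ν) + h x :=
  successive_approximation_bounded_and_limit_general G μ ν q hq0 hq1 h u
    (fun _ => hGmeas.of_uncurry_left.aemeasurable) hGμb hGνb hhb hu0 huj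
    (hiter _ (one_le_one_div (sub_pos.2 hq1) (sub_le_self 1 hq0.le)))
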